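/- RSD never strictly rank dominates NBM: for every setting and every type profile t, if RSD(t) weakly rank dominates NBM(t) at t, then RSD(t) and NBM(t) have identical rank distributions at t; in particular, RSD(t) does not strictly rank dominate NBM(t) at any type profile. -/

import Mathlib

/-!
The argument is pathwise in the priority ordering `π`.  Write `a` for the serial dictatorship
outcome and `b` for the naïve Boston outcome under `π`, and suppose that for all ranks `k' < k`
the same agents receive their `k'`-th choice under `a` and under `b`.  Then every agent `i` who
receives her `k`-th choice `j` under `a` also receives it under `b`
(`nbm_of_sd_of_agree_below`).  Otherwise `i` was rejected by `j` in round `k` of the Boston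
mechanism, so there is a set `S` of `q j` agents who hold `j` under `b` and who either rank `j`
above position `k`, or rank it `k`-th and precede `i` in `π` (`NBMassign_full`).  The agents of the
first kind hold `j` under `a` by the assumption on lower ranks.  An agent of the second kind chooses
before `i` in the serial dictatorship, when `j` is still available (`SDassign_no_envy`), so she
gets one of her `k` best choices, and by the assumption on lower ranks it is `j`.  Hence
the `q j + 1` agents in `S ∪ {i}` all hold `j` under `a`, which violates the capacity of `j`
(`SDassign_capacity`).

Consequently, once all lower ranks agree for every `π`, the expected number of `k`-th choices is
at most as large under RSD as under NBM.  Weak rank dominance gives the converse inequality, so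
equality holds for every `π` separately, and the inclusion of winner sets is an equality.  By
strong induction on `k`, SD and NBM award the same `k`-th choices for every `k` and `π`.
-/


open Finset

/-- A preference type (strict ranking of the `m` objects): `t k` is the object
ranked `k`-th (0-indexed).  Object `a` is preferred to `b` iff
`t.symm a < t.symm b`. -/
abbrev Pref (m : ℕ) := Fin m ≃ Fin m

/-- One round of a Boston-style mechanism: the agents in `order` (highest priority
first) that are not yet assigned apply to `choice i`; an applicant receives a copy
iff the remaining capacity of its chosen object is still positive. -/
def applyRound {n m : ℕ} (choice : Fin n → Option (Fin m)) (order : List (Fin n))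
    (st : (Fin n → Option (Fin m)) × (Fin m → ℕ)) :
    (Fin n → Option (Fin m)) × (Fin m → ℕ) :=
  order.foldl
    (fun s i =>
      match s.1 i with
      | some _ => s
      | none =>
        match choice i with
        | none => s
        | some j =>
          if 0 < s.2 j then
            (Function.update s.1 i (some j), Function.update s.2 j (s.2 j - 1))
          else s)
    st

/-- The list of agents in order of priority under `π` (the agent with `π i = 0` first). -/
def priorityList {n : ℕ} (π : Equiv.Perm (Fin n)) : List (Fin n) :=
  (List.finRange n).map π.symm

/-- The most preferred object (under `ti`) among the objects with positive
remaining capacity, if any such object exists. -/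
def favorite {m : ℕ} (ti : Pref m) (cap : Fin m → ℕ) : Option (Fin m) :=
  ((List.finRange m).find? (fun k => decide (0 < cap (ti k)))).map ti

/-- The naïve Boston mechanism for a fixed priority ordering `π`: in round `k`
every not-yet-assigned agent applies to its `k`-th ranked object. -/
def NBMassign {n m : ℕ} (q : Fin m → ℕ) (t : Fin n → Pref m) (π : Equiv.Perm (Fin n)) :
    Fin n → Option (Fin m) :=
  ((List.finRange m).foldl
    (fun st k => applyRound (fun i => some (t i k)) (priorityList π) st)
    ((fun _ => none), q)).1

/-- The adaptive Boston mechanism for a fixed priority ordering `π`: in every round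
each not-yet-assigned agent applies to its most preferred object among the objects
with strictly positive remaining capacity (at the beginning of the round). -/
def ABMassign {n m : ℕ} (q : Fin m → ℕ) (t : Fin n → Pref m) (π : Equiv.Perm (Fin n)) :
    Fin n → Option (Fin m) :=
  ((fun st => applyRound (fun i => favorite (t i) st.2) (priorityList π) st)^[n]
    ((fun _ => none), q)).1

/-- The serial dictatorship for a fixed priority ordering `π`: agents are processed
in order of priority, each receiving one copy of its most preferred object among
those with remaining capacity. -/
def SDassign {n m : ℕ} (q : Fin m → ℕ) (t : Fin n → Pref m) (π : Equiv.Perm (Fin n)) :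
    Fin n → Option (Fin m) :=
  ((priorityList π).foldl
    (fun s i =>
      match favorite (t i) s.2 with
      | none => s
      | some j => (Function.update s.1 i (some j), Function.update s.2 j (s.2 j - 1)))
    ((fun _ => none), q)).1

/-- The (deterministic) allocation matrix induced by an assignment of objects to agents. -/
def detAlloc {n m : ℕ} (a : Fin n → Option (Fin m)) : Fin n → Fin m → ℝ :=
  fun i j => if a i = some j then 1 else 0

/-- The naïve Boston mechanism: the average of `NBMassign` over all `n!` priority orderings. -/
noncomputable def NBM {n m : ℕ} (q : Fin m → ℕ) (t : Fin n → Pref m) : Fin n → Fin m → ℝ :=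
  fun i j => (∑ π : Equiv.Perm (Fin n), detAlloc (NBMassign q t π) i j) / (Nat.factorial n)

/-- The adaptive Boston mechanism: the average of `ABMassign` over all `n!` priority orderings. -/
noncomputable def ABM {n m : ℕ} (q : Fin m → ℕ) (t : Fin n → Pref m) : Fin n → Fin m → ℝ :=
  fun i j => (∑ π : Equiv.Perm (Fin n), detAlloc (ABMassign q t π) i j) / (Nat.factorial n)

/-- Random serial dictatorship: the average of `SDassign` over all `n!` priority orderings. -/
noncomputable def RSD {n m : ℕ} (q : Fin m → ℕ) (t : Fin n → Pref m) : Fin n → Fin m → ℝ :=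
  fun i j => (∑ π : Equiv.Perm (Fin n), detAlloc (SDassign q t π) i j) / (Nat.factorial n)

/-- `x` is an allocation for capacities `q`. -/
def IsAlloc {n m : ℕ} (q : Fin m → ℕ) (x : Fin n → Fin m → ℝ) : Prop :=
  (∀ i j, 0 ≤ x i j ∧ x i j ≤ 1) ∧ (∀ i, ∑ j, x i j = 1) ∧ ∀ j, ∑ i, x i j ≤ q j

/-- First-order stochastic dominance of `v` over `w` with respect to the ranking `ti`. -/
def FOSD {m : ℕ} (ti : Pref m) (v w : Fin m → ℝ) : Prop :=
  ∀ K : Fin m, ∑ k ∈ Finset.Iic K, w (ti k) ≤ ∑ k ∈ Finset.Iic K, v (ti k)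

/-- Strict first-order stochastic dominance. -/
def StrictFOSD {m : ℕ} (ti : Pref m) (v w : Fin m → ℝ) : Prop :=
  FOSD ti v w ∧ ∃ K : Fin m, ∑ k ∈ Finset.Iic K, w (ti k) < ∑ k ∈ Finset.Iic K, v (ti k)

/-- `x` ordinally dominates `y` at type profile `t`. -/
def OrdDom {n m : ℕ} (t : Fin n → Pref m) (x y : Fin n → Fin m → ℝ) : Prop :=
  ∀ i, FOSD (t i) (x i) (y i)

/-- `x` strictly ordinally dominates `y` at type profile `t`. -/
def StrictOrdDom {n m : ℕ} (t : Fin n → Pref m) (x y : Fin n → Fin m → ℝ) : Prop :=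
  OrdDom t x y ∧ ∃ i : Fin n, ∃ K : Fin m,
    ∑ k ∈ Finset.Iic K, y i (t i k) < ∑ k ∈ Finset.Iic K, x i (t i k)

/-- The rank distribution of allocation `x` at profile `t`: `rankDist t x k` is the
expected number of `k`-th (0-indexed) choices allocated. -/
noncomputable def rankDist {n m : ℕ} (t : Fin n → Pref m) (x : Fin n → Fin m → ℝ)
    (k : Fin m) : ℝ :=
  ∑ i, x i (t i k)

/-- `x` weakly rank dominates `y` at profile `t`. -/
def WeakRankDom {n m : ℕ} (t : Fin n → Pref m) (x y : Fin n → Fin m → ℝ) : Prop :=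
  ∀ K : Fin m, ∑ k ∈ Finset.Iic K, rankDist t y k ≤ ∑ k ∈ Finset.Iic K, rankDist t x k

/-- `x` strictly rank dominates `y` at profile `t`. -/
def StrictRankDom {n m : ℕ} (t : Fin n → Pref m) (x y : Fin n → Fin m → ℝ) : Prop :=
  WeakRankDom t x y ∧ ∃ K : Fin m,
    ∑ k ∈ Finset.Iic K, rankDist t y k < ∑ k ∈ Finset.Iic K, rankDist t x k

/-- Feasibility of a deterministic (total) assignment. -/
def Feasible {n m : ℕ} (q : Fin m → ℕ) (y : Fin n → Fin m) : Prop :=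
  ∀ j, (Finset.univ.filter fun i => y i = j).card ≤ q j

/-- Ex-post efficiency at `t` of a deterministic assignment `a`: no feasible
deterministic assignment makes every agent weakly better off and some agent
strictly better off. -/
def ExPostEfficientAt {n m : ℕ} (q : Fin m → ℕ) (t : Fin n → Pref m)
    (a : Fin n → Option (Fin m)) : Prop :=
  ¬ ∃ y : Fin n → Fin m, Feasible q y ∧
      (∀ i j, a i = some j → (t i).symm (y i) ≤ (t i).symm j) ∧
      ∃ i j, a i = some j ∧ (t i).symm (y i) < (t i).symm j

/-- The expected number of allocated first choices under `x` at profile `t`. -/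
noncomputable def d1 {n m : ℕ} (t : Fin n → Pref m) (x : Fin n → Fin m → ℝ) : ℝ :=
  ∑ i, ∑ j, if ((t i).symm j : ℕ) = 0 then x i j else 0

/-- `x` is first-choice-maximizing at profile `t`. -/
def FirstChoiceMax {n m : ℕ} (q : Fin m → ℕ) (t : Fin n → Pref m)
    (x : Fin n → Fin m → ℝ) : Prop :=
  IsAlloc q x ∧ ∀ y : Fin n → Fin m → ℝ, IsAlloc q y → d1 t y ≤ d1 t x

/-- `u` is a vNM utility function consistent with the ranking `ti`. -/
def Consistent {m : ℕ} (ti : Pref m) (u : Fin m → ℝ) : Prop :=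
  ∀ a b : Fin m, ti.symm a < ti.symm b → u b < u a

/-- Uniformly relatively bounded indifference with bound `r`. -/
def URBI {m : ℕ} (r : ℝ) (u : Fin m → ℝ) : Prop :=
  ∀ a b : Fin m, u b < u a → u b - (⨅ j, u j) ≤ r * (u a - (⨅ j, u j))

/-! ### Applications and the conservation of copies -/

/-- One step of the serial dictatorship: agent `i` takes her favorite available object. -/
def sdStep {n m : ℕ} (t : Fin n → Pref m)
    (s : (Fin n → Option (Fin m)) × (Fin m → ℕ)) (i : Fin n) :
    (Fin n → Option (Fin m)) × (Fin m → ℕ) :=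
  match favorite (t i) s.2 with
  | none => s
  | some j => (Function.update s.1 i (some j), Function.update s.2 j (s.2 j - 1))

/-- A single application in the naïve Boston mechanism: the pair `p = (k, i)` stands for agent `i`
applying, in round `k`, to her `k`-th choice, unless she is already assigned. -/
def nbStep {n m : ℕ} (t : Fin n → Pref m)
    (s : (Fin n → Option (Fin m)) × (Fin m → ℕ)) (p : Fin m × Fin n) :
    (Fin n → Option (Fin m)) × (Fin m → ℕ) :=
  match s.1 p.2 with
  | some _ => s
  | none =>
    if 0 < s.2 (t p.2 p.1) then
      (Function.update s.1 p.2 (some (t p.2 p.1)),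
        Function.update s.2 (t p.2 p.1) (s.2 (t p.2 p.1) - 1))
    else s

/-- All applications `(k, i)` of the naïve Boston mechanism in chronological order. -/
def applications {n m : ℕ} (π : Equiv.Perm (Fin n)) : List (Fin m × Fin n) :=
  (List.finRange m).flatMap fun k => (priorityList π).map fun i => (k, i)

/-- The number of copies of `j` in circulation: those held by agents plus those still available. -/
def copies {n m : ℕ} (s : (Fin n → Option (Fin m)) × (Fin m → ℕ)) (j : Fin m) : ℕ :=
  (univ.filter fun i => s.1 i = some j).card + s.2 j

lemma copies_assign {n m : ℕ} (s : (Fin n → Option (Fin m)) × (Fin m → ℕ)) (i : Fin n)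
    (j j' : Fin m) (hi : s.1 i = none) (hj : 0 < s.2 j) :
    copies (Function.update s.1 i (some j), Function.update s.2 j (s.2 j - 1)) j'
      = copies s j' := by
  unfold copies
  by_cases h : j' = j
  · subst h
    have : (univ.filter fun i' => Function.update s.1 i (some j') i' = some j')
        = insert i (univ.filter fun i' => s.1 i' = some j') := by
      ext x
      by_cases hx : x = i
      · subst hx; simp
      · simp [hx]
    simp only [this, Function.update_self]
    rw [card_insert_of_notMem (by simp [hi])]
    omega
  · have : (univ.filter fun i' => Function.update s.1 i (some j) i' = some j')
        = (univ.filter fun i' => s.1 i' = some j') := by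
      ext x
      by_cases hx : x = i
      · subst hx; simp [hi, Ne.symm h]
      · simp [hx]
    simp only [this]
    rw [Function.update_of_ne h]

lemma copies_empty {n m : ℕ} (q : Fin m → ℕ) (j : Fin m) :
    copies ((fun _ : Fin n => none), q) j = q j := by
  simp [copies]

/-! ### Serial dictatorship -/

lemma favorite_pos {m : ℕ} {ti : Pref m} {cap : Fin m → ℕ} {j : Fin m}
    (h : favorite ti cap = some j) : 0 < cap j := by
  unfold favorite at h
  rw [Option.map_eq_some_iff] at h
  obtain ⟨k, hk, rfl⟩ := h
  simpa using List.find?_some hk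

lemma favorite_le {m : ℕ} (ti : Pref m) (cap : Fin m → ℕ) (k : Fin m) (h : 0 < cap (ti k)) :
    ∃ k' ≤ k, favorite ti cap = some (ti k') := by
  unfold favorite
  cases hf : (List.finRange m).find? (fun k => decide (0 < cap (ti k))) with
  | none =>
    rw [List.find?_eq_none] at hf
    exact absurd h (by simpa using hf k (List.mem_finRange k))
  | some k' =>
    refine ⟨k', ?_, rfl⟩
    obtain ⟨-, as, bs, hl, has⟩ := List.find?_eq_some_iff_append.1 hf
    have hk : k ∈ as ++ k' :: bs := hl ▸ List.mem_finRange k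
    have hs : (as ++ k' :: bs).Pairwise (· < ·) := hl ▸ List.pairwise_lt_finRange m
    rcases List.mem_append.1 hk with hk | hk
    · have := has k hk
      simp at this
      omega
    · rcases List.mem_cons.1 hk with hk | hk
      · exact hk.ge
      · exact (List.rel_of_pairwise_cons (List.pairwise_append.1 hs).2.1 hk).le

lemma sdStep_cap_le {n m : ℕ} (t : Fin n → Pref m)
    (s : (Fin n → Option (Fin m)) × (Fin m → ℕ)) (i : Fin n) (j : Fin m) :
    (sdStep t s i).2 j ≤ s.2 j := by
  unfold sdStep
  split
  · rfl
  · rename_i j' _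
    by_cases h : j = j'
    · subst h; simp
    · simp [h]

lemma sdStep_of_ne {n m : ℕ} (t : Fin n → Pref m)
    (s : (Fin n → Option (Fin m)) × (Fin m → ℕ)) {i i' : Fin n} (h : i' ≠ i) :
    (sdStep t s i).1 i' = s.1 i' := by
  unfold sdStep
  split
  · rfl
  · simp [h]

lemma sdFold_of_notMem {n m : ℕ} (t : Fin n → Pref m) (l : List (Fin n))
    (s : (Fin n → Option (Fin m)) × (Fin m → ℕ)) {i : Fin n} (h : i ∉ l) :
    (l.foldl (sdStep t) s).1 i = s.1 i := by
  induction l generalizing s with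
  | nil => rfl
  | cons a l ih =>
    simp only [List.mem_cons, not_or] at h
    rw [List.foldl_cons, ih _ h.2, sdStep_of_ne t s h.1]

lemma copies_sdFold {n m : ℕ} (t : Fin n → Pref m) (l : List (Fin n)) (hl : l.Nodup)
    (s : (Fin n → Option (Fin m)) × (Fin m → ℕ)) (hs : ∀ i ∈ l, s.1 i = none) (j : Fin m) :
    copies (l.foldl (sdStep t) s) j = copies s j := by
  induction l generalizing s with
  | nil => rfl
  | cons a l ih =>
    rw [List.nodup_cons] at hl
    rw [List.foldl_cons, ih hl.2]
    · have ha := hs a (by simp)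
      unfold sdStep
      split
      · rfl
      · rename_i j' hj'
        exact copies_assign s a j' j ha (favorite_pos hj')
    · intro i hi
      rw [sdStep_of_ne t s (by rintro rfl; exact hl.1 hi)]
      exact hs i (by simp [hi])

/-- An object that is obtained by one of the agents still to choose is available now. -/
lemma sdFold_pos {n m : ℕ} (t : Fin n → Pref m) (l : List (Fin n)) (hl : l.Nodup)
    (s : (Fin n → Option (Fin m)) × (Fin m → ℕ)) {i : Fin n} (hi : s.1 i = none) {j : Fin m}
    (h : (l.foldl (sdStep t) s).1 i = some j) : 0 < s.2 j := by
  induction l generalizing s with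
  | nil => simp [hi] at h
  | cons a l ih =>
    rw [List.nodup_cons] at hl
    rw [List.foldl_cons] at h
    by_cases hia : i = a
    · subst hia
      rw [sdFold_of_notMem t l _ hl.1] at h
      unfold sdStep at h
      split at h
      · simp [hi] at h
      · rename_i j' hj'
        simp at h
        exact h ▸ favorite_pos hj'
    · exact (ih hl.2 _ (by rw [sdStep_of_ne t s hia, hi]) h).trans_le (sdStep_cap_le t s a j)

lemma sdFold_pairwise {n m : ℕ} (t : Fin n → Pref m) (l : List (Fin n)) (hl : l.Nodup)
    (s : (Fin n → Option (Fin m)) × (Fin m → ℕ)) (hs : ∀ i ∈ l, s.1 i = none) :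
    l.Pairwise fun i' i => ∀ k, (l.foldl (sdStep t) s).1 i = some (t i' k) →
      ∃ k' ≤ k, (l.foldl (sdStep t) s).1 i' = some (t i' k') := by
  induction l generalizing s with
  | nil => exact List.Pairwise.nil
  | cons a l ih =>
    have hl' := List.nodup_cons.1 hl
    have hs' : ∀ i ∈ l, (sdStep t s a).1 i = none := by
      intro i hi
      rw [sdStep_of_ne t s (by rintro rfl; exact hl'.1 hi)]
      exact hs i (by simp [hi])
    refine List.Pairwise.cons ?_ (ih hl'.2 _ hs')
    intro i hi k h
    rw [List.foldl_cons] at h ⊢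
    have hpos := (sdFold_pos t l hl'.2 _ (hs' i hi) h).trans_le (sdStep_cap_le t s a _)
    obtain ⟨k', hk', hf⟩ := favorite_le (t a) s.2 k hpos
    refine ⟨k', hk', ?_⟩
    rw [sdFold_of_notMem t l _ hl'.1]
    simp [sdStep, hf]

lemma SDassign_eq {n m : ℕ} (q : Fin m → ℕ) (t : Fin n → Pref m) (π : Equiv.Perm (Fin n)) :
    SDassign q t π = ((priorityList π).foldl (sdStep t) ((fun _ => none), q)).1 := rfl

lemma priorityList_pairwise {n : ℕ} (π : Equiv.Perm (Fin n)) :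
    (priorityList π).Pairwise fun i' i => π i' < π i := by
  unfold priorityList
  rw [List.pairwise_map]
  simpa using List.pairwise_lt_finRange n

lemma mem_priorityList {n : ℕ} (π : Equiv.Perm (Fin n)) (i : Fin n) : i ∈ priorityList π := by
  unfold priorityList
  exact List.mem_map.2 ⟨π i, List.mem_finRange _, by simp⟩

lemma priorityList_nodup {n : ℕ} (π : Equiv.Perm (Fin n)) : (priorityList π).Nodup :=
  (List.nodup_finRange n).map π.symm.injective

lemma SDassign_capacity {n m : ℕ} (q : Fin m → ℕ) (t : Fin n → Pref m) (π : Equiv.Perm (Fin n))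
    (j : Fin m) : (univ.filter fun i => SDassign q t π i = some j).card ≤ q j := by
  have h := copies_sdFold t (priorityList π) (priorityList_nodup π) ((fun _ => none), q)
    (fun _ _ => rfl) j
  rw [copies_empty] at h
  rw [SDassign_eq]
  unfold copies at h
  omega

lemma SDassign_no_envy {n m : ℕ} (q : Fin m → ℕ) (t : Fin n → Pref m) (π : Equiv.Perm (Fin n))
    {i' i : Fin n} (hlt : π i' < π i) {k : Fin m} (h : SDassign q t π i = some (t i' k)) :
    ∃ k' ≤ k, SDassign q t π i' = some (t i' k') := by
  have hp := sdFold_pairwise t (priorityList π) (priorityList_nodup π) ((fun _ => none), q)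
    (fun _ _ => rfl)
  obtain ⟨l₁, l₂, hl⟩ := List.append_of_mem (mem_priorityList π i')
  have ho := priorityList_pairwise π
  have hi := mem_priorityList π i
  rw [SDassign_eq] at h ⊢
  generalize (List.foldl (sdStep t) ((fun _ => none), q) (priorityList π)).1 = f at h hp ⊢
  rw [hl] at hp ho hi
  rcases List.mem_append.1 hi with hi | hi
  · exact absurd hlt ((List.pairwise_append.1 ho).2.2 i hi i' (by simp)).asymm
  · rcases List.mem_cons.1 hi with rfl | hi
    · exact absurd hlt (lt_irrefl _)
    · exact List.rel_of_pairwise_cons (List.pairwise_append.1 hp).2.1 hi k h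

/-! ### The naïve Boston mechanism -/

lemma NBMassign_eq {n m : ℕ} (q : Fin m → ℕ) (t : Fin n → Pref m) (π : Equiv.Perm (Fin n)) :
    NBMassign q t π = ((applications π).foldl (nbStep t) ((fun _ => none), q)).1 := by
  unfold applications
  rw [List.foldl_flatMap]
  simp only [List.foldl_map]
  rfl

lemma nbStep_of_some {n m : ℕ} (t : Fin n → Pref m)
    (s : (Fin n → Option (Fin m)) × (Fin m → ℕ)) (p : Fin m × Fin n) {i : Fin n} {j : Fin m}
    (h : s.1 i = some j) : (nbStep t s p).1 i = some j := by
  unfold nbStep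
  split
  · exact h
  · rename_i hp
    split
    · have : i ≠ p.2 := by rintro rfl; simp [h] at hp
      simp [this, h]
    · exact h

lemma nbFold_of_some {n m : ℕ} (t : Fin n → Pref m) (L : List (Fin m × Fin n))
    (s : (Fin n → Option (Fin m)) × (Fin m → ℕ)) {i : Fin n} {j : Fin m}
    (h : s.1 i = some j) : (L.foldl (nbStep t) s).1 i = some j := by
  induction L generalizing s with
  | nil => exact h
  | cons p L ih => exact ih _ (nbStep_of_some t s p h)

lemma copies_nbFold {n m : ℕ} (t : Fin n → Pref m) (L : List (Fin m × Fin n))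
    (s : (Fin n → Option (Fin m)) × (Fin m → ℕ)) (j : Fin m) :
    copies (L.foldl (nbStep t) s) j = copies s j := by
  induction L generalizing s with
  | nil => rfl
  | cons p L ih =>
    rw [List.foldl_cons, ih]
    unfold nbStep
    split
    · rfl
    · rename_i hp
      split
      · rename_i hpos
        exact copies_assign s p.2 _ j hp hpos
      · rfl

/-- Every object held was obtained through one of the applications processed. -/
lemma nbFold_source {n m : ℕ} (t : Fin n → Pref m) (L : List (Fin m × Fin n))
    (s : (Fin n → Option (Fin m)) × (Fin m → ℕ)) {i : Fin n} {j : Fin m} (hi : s.1 i = none)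
    (h : (L.foldl (nbStep t) s).1 i = some j) : ∃ k, (k, i) ∈ L ∧ t i k = j := by
  induction L generalizing s with
  | nil => simp [hi] at h
  | cons p L ih =>
    rw [List.foldl_cons] at h
    cases hc : (nbStep t s p).1 i with
    | none =>
      obtain ⟨k, hk, hj⟩ := ih _ hc h
      exact ⟨k, List.mem_cons_of_mem _ hk, hj⟩
    | some j' =>
      rw [nbFold_of_some t L _ hc, Option.some_inj] at h
      subst h
      unfold nbStep at hc
      split at hc
      · simp [hi] at hc
      · split at hc
        · by_cases hip : i = p.2
          · subst hip
            simp at hc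
            exact ⟨p.1, by simp, hc⟩
          · simp [hip, hi] at hc
        · simp [hi] at hc

lemma applications_pairwise {n m : ℕ} (π : Equiv.Perm (Fin n)) :
    (applications π : List (Fin m × Fin n)).Pairwise
      fun p' p => p'.1 < p.1 ∨ p'.1 = p.1 ∧ π p'.2 < π p.2 := by
  unfold applications
  rw [List.pairwise_flatMap]
  constructor
  · intro k _
    rw [List.pairwise_map]
    simpa using priorityList_pairwise π
  · refine (List.pairwise_lt_finRange m).imp ?_
    intro k k' hk p hp p' hp'
    obtain ⟨_, _, rfl⟩ := List.mem_map.1 hp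
    obtain ⟨_, _, rfl⟩ := List.mem_map.1 hp'
    exact Or.inl hk

lemma mem_applications {n m : ℕ} (π : Equiv.Perm (Fin n)) (k : Fin m) (i : Fin n) :
    (k, i) ∈ applications π :=
  List.mem_flatMap.2 ⟨k, List.mem_finRange k, List.mem_map.2 ⟨i, mem_priorityList π i, rfl⟩⟩

/-- If `i` gets none of her choices up to the `k`-th, then her `k`-th choice was exhausted when she
applied to it, so it is filled by the agents `S` whose applications came earlier. -/
lemma NBMassign_full {n m : ℕ} (q : Fin m → ℕ) (t : Fin n → Pref m) (π : Equiv.Perm (Fin n))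
    (i : Fin n) (k : Fin m) (h : ∀ k' ≤ k, NBMassign q t π i ≠ some (t i k')) :
    ∃ S : Finset (Fin n), S.card = q (t i k) ∧ ∀ i' ∈ S, NBMassign q t π i' = some (t i k) ∧
      ∃ k', t i' k' = t i k ∧ (k' < k ∨ k' = k ∧ π i' < π i) := by
  rw [NBMassign_eq] at h ⊢
  have ho := applications_pairwise (m := m) π
  obtain ⟨L₁, L₂, hL⟩ := List.append_of_mem (mem_applications π k i)
  rw [hL] at h ho ⊢
  rw [List.foldl_append, List.foldl_cons] at h ⊢
  have hlex : ∀ p ∈ L₁, p.1 < k ∨ p.1 = k ∧ π p.2 < π i := fun p hp =>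
    (List.pairwise_append.1 ho).2.2 p hp (k, i) (by simp)
  have hc := copies_nbFold t L₁ ((fun _ => none), q) (t i k)
  have hsrc := fun i' j => nbFold_source t L₁ ((fun _ => none), q) (i := i') (j := j) rfl
  rw [copies_empty] at hc
  generalize List.foldl (nbStep t) ((fun _ => none), q) L₁ = u at h hc hsrc ⊢
  have hui : u.1 i = none := by
    cases hu : u.1 i with
    | none => rfl
    | some j =>
      obtain ⟨k', hk', rfl⟩ := hsrc i j hu
      refine absurd (nbFold_of_some t L₂ _ (nbStep_of_some t u (k, i) hu)) (h k' ?_)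
      rcases hlex _ hk' with h' | h'
      · exact h'.le
      · exact h'.1.le
  have hcap : u.2 (t i k) = 0 := by
    by_contra hne
    refine h k le_rfl (nbFold_of_some t L₂ _ ?_)
    simp [nbStep, hui, Nat.pos_of_ne_zero hne]
  refine ⟨univ.filter fun i' => u.1 i' = some (t i k), ?_, ?_⟩
  · rw [← hc, copies, hcap, add_zero]
  · intro i' hi'
    have hi' := (mem_filter.1 hi').2
    refine ⟨nbFold_of_some t L₂ _ (nbStep_of_some t u (k, i) hi'), ?_⟩
    obtain ⟨k', hk', hj⟩ := hsrc i' _ hi'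
    exact ⟨k', hj, hlex _ hk'⟩

/-! ### Comparison of the two mechanisms -/

/-- If SD and NBM award the same choices of every rank below `k`, then everyone who gets her `k`-th
choice under SD also gets it under NBM. -/
lemma nbm_of_sd_of_agree_below {n m : ℕ} (q : Fin m → ℕ) (t : Fin n → Pref m)
    (π : Equiv.Perm (Fin n)) (k : Fin m)
    (hind : ∀ k' < k, ∀ i, SDassign q t π i = some (t i k') ↔ NBMassign q t π i = some (t i k'))
    (i : Fin n) (hi : SDassign q t π i = some (t i k)) : NBMassign q t π i = some (t i k) := by
  by_contra hb
  obtain ⟨S, hS, hSmem⟩ := NBMassign_full q t π i k (by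
    intro k' hk' hbk
    rcases hk'.lt_or_eq with hlt | rfl
    · have h := (hind k' hlt i).2 hbk
      rw [hi, Option.some_inj, (t i).apply_eq_iff_eq] at h
      exact hlt.ne' h
    · exact hb hbk)
  have hiS : i ∉ S := fun h => hb (hSmem i h).1
  have hsub : insert i S ⊆ univ.filter fun i' => SDassign q t π i' = some (t i k) := by
    intro i' hi'
    rw [mem_filter]
    refine ⟨mem_univ _, ?_⟩
    rcases mem_insert.1 hi' with rfl | hi'
    · exact hi
    · obtain ⟨hb', k', hk', hlt | ⟨rfl, hπ⟩⟩ := hSmem i' hi'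
      · rw [← hk'] at hb' ⊢
        exact (hind k' hlt i').2 hb'
      · obtain ⟨k'', hle, ha⟩ := SDassign_no_envy q t π hπ (hk'.symm ▸ hi)
        rcases hle.lt_or_eq with hlt | rfl
        · have h := (hind k'' hlt i').1 ha
          rw [hb', ← hk', Option.some_inj, (t i').apply_eq_iff_eq] at h
          exact absurd h hlt.ne'
        · rw [ha, hk']
  have h1 := card_le_card hsub
  rw [card_insert_of_notMem hiS, hS] at h1
  have h2 := SDassign_capacity q t π (t i k)
  omega

/-- The rank distribution of an average of deterministic assignments counts, on average, the agents
who get their `k`-th choice. -/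
lemma rankDist_average {n m : ℕ} (t : Fin n → Pref m)
    (f : Equiv.Perm (Fin n) → Fin n → Option (Fin m)) (k : Fin m) :
    rankDist t (fun i j => (∑ π, detAlloc (f π) i j) / (Nat.factorial n)) k
      = (∑ π, ((univ.filter fun i => f π i = some (t i k)).card : ℝ)) / (Nat.factorial n) := by
  unfold rankDist
  rw [← sum_div, sum_comm]
  simp [detAlloc]

lemma agree_of_weakRankDom {n m : ℕ} (q : Fin m → ℕ) (t : Fin n → Pref m)
    (h : WeakRankDom t (RSD q t) (NBM q t)) (k : Fin m) :
    ∀ π i, SDassign q t π i = some (t i k) ↔ NBMassign q t π i = some (t i k) := by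
  induction k using WellFoundedLT.induction with
  | ind k ih =>
    have hsub : ∀ π : Equiv.Perm (Fin n),
        (univ.filter fun i => SDassign q t π i = some (t i k)) ⊆
          univ.filter fun i => NBMassign q t π i = some (t i k) := by
      intro π i hi
      rw [mem_filter] at hi ⊢
      exact ⟨hi.1, nbm_of_sd_of_agree_below q t π k (fun k' hk' => ih k' hk' π) i hi.2⟩
    have hlow : ∑ k' ∈ Iio k, rankDist t (NBM q t) k' = ∑ k' ∈ Iio k, rankDist t (RSD q t) k' := by
      refine sum_congr rfl fun k' hk' => ?_
      unfold NBM RSD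
      rw [rankDist_average, rankDist_average]
      simp only [ih k' (mem_Iio.1 hk')]
    have hk := h k
    rw [← Iio_insert k, sum_insert (by simp), sum_insert (by simp), hlow] at hk
    have hk := le_of_add_le_add_right hk
    unfold NBM RSD at hk
    rw [rankDist_average, rankDist_average,
      div_le_div_iff_of_pos_right (by exact_mod_cast Nat.factorial_pos n)] at hk
    have hle : ∀ π ∈ (univ : Finset (Equiv.Perm (Fin n))),
        ((univ.filter fun i => SDassign q t π i = some (t i k)).card : ℝ) ≤
          (univ.filter fun i => NBMassign q t π i = some (t i k)).card := fun π _ => by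
      exact_mod_cast card_le_card (hsub π)
    have heq := (sum_eq_sum_iff_of_le hle).1 (le_antisymm (sum_le_sum hle) hk)
    intro π i
    have hset := eq_of_subset_of_card_le (hsub π) (by exact_mod_cast (heq π (mem_univ π)).ge)
    simpa using Finset.ext_iff.1 hset i

/-- RSD never strictly rank dominates NBM: if `RSD(t)` weakly rank
dominates `NBM(t)` then the two rank distributions coincide; in particular `RSD(t)`
never strictly rank dominates `NBM(t)`. -/
theorem rsd_never_strictly_rank_dominates_nbm (n m : ℕ) (q : Fin m → ℕ)
    (hq : n ≤ ∑ j, q j) (t : Fin n → Pref m) :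
    (WeakRankDom t (RSD q t) (NBM q t) →
      ∀ k : Fin m, rankDist t (RSD q t) k = rankDist t (NBM q t) k) ∧
    ¬ StrictRankDom t (RSD q t) (NBM q t) := by
  have key : WeakRankDom t (RSD q t) (NBM q t) →
      ∀ k : Fin m, rankDist t (RSD q t) k = rankDist t (NBM q t) k := by
    intro h k
    unfold NBM RSD
    rw [rankDist_average, rankDist_average]
    simp only [agree_of_weakRankDom q t h k]
  refine ⟨key, ?_⟩
  rintro ⟨h, K, hK⟩
  exact hK.ne (sum_congr rfl fun k _ => (key h k).symm)
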